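/- Let s, y ∈ ℝⁿ with s ≠ 0, let H be a symmetric positive definite n×n real matrix with B = H⁻¹, and let β > 0 satisfy sᵀy > −1/β. Set γ = 1/(sᵀy + 1/β), ω = 1/(sᵀy + 2/β), let H₊ be the SP-BFGS update of H with data (s, y, β), and let B₊ = H₊⁻¹. Then λ_max(B₊) ≤ Tr(B₊) ≤ (1 + β ‖y‖₂ ‖s‖₂) Tr(B) + γ ‖y‖₂², where ‖·‖₂ denotes the Euclidean norm; equivalently, the smallest eigenvalue of H₊ satisfies λ_min(H₊) ≥ 1/[(1 + β ‖y‖₂ ‖s‖₂) Tr(B) + γ ‖y‖₂²]. -/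

import Mathlib

open Matrix

/-!
Write `H₊ = M H Mᵀ + c s sᵀ` with `M = 1 - ω s yᵀ`. The trivial identity `M · 1 + s · (ω yᵀ) = 1`
says that the block row `P = [M, s]` has the block column `Q = [1; ω yᵀ]` as a right inverse, and
`H₊ = P A Pᵀ` with `A = diag(H, c)`. As in the Gauss–Markov theorem, `P Q = 1` forces
`(P A Pᵀ)⁻¹ ≤ Qᵀ A⁻¹ Q` in the Loewner order, that is, `B₊ ≤ B + (ω² / c) y yᵀ`. Since
`0 < ω ≤ γ ≤ c`, taking traces gives `Tr B₊ ≤ Tr B + γ ‖y‖²`.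
-/

section RightInverse

open scoped MatrixOrder ComplexOrder

theorem posDef_mul_mul_conjTranspose_of_mul_eq_one {R m n : Type*} [Ring R] [PartialOrder R]
    [StarRing R] [Fintype m] [Finite n] [DecidableEq n] {A : Matrix m m R} (hA : A.PosDef)
    {P : Matrix n m R} {Q : Matrix m n R} (hPQ : P * Q = 1) : (P * A * Pᴴ).PosDef := by
  have := Fintype.ofFinite n
  refine hA.mul_mul_conjTranspose_same (Function.LeftInverse.injective (g := (· ᵥ* Q)) fun x => ?_)
  simp only [vecMul_vecMul, hPQ, vecMul_one]

theorem posDef_fromBlocks_zero {𝕜 p q : Type*} [RCLike 𝕜] [Finite p] [Finite q]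
    {A : Matrix p p 𝕜} {D : Matrix q q 𝕜} (hA : A.PosDef) (hD : D.PosDef) :
    (fromBlocks A 0 0 D).PosDef := by
  classical
  have := Fintype.ofFinite p
  have := Fintype.ofFinite q
  have := hA.isUnit.invertible
  have hsemi : (fromBlocks A 0 0 D).PosSemidef := by
    simpa using (PosDef.fromBlocks₁₁ (0 : Matrix p q 𝕜) D hA).mpr (by simpa using hD.posSemidef)
  exact hsemi.posDef_iff_isUnit.mpr (isUnit_fromBlocks_zero₂₁.mpr ⟨hA.isUnit, hD.isUnit⟩)

theorem fromCols_mul_fromBlocks_zero_mul_conjTranspose {R n p q : Type*} [Semiring R]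
    [StarRing R] [Fintype p] [Fintype q] (P₁ : Matrix n p R) (P₂ : Matrix n q R)
    (A : Matrix p p R) (D : Matrix q q R) :
    fromCols P₁ P₂ * fromBlocks A 0 0 D * (fromCols P₁ P₂)ᴴ = P₁ * A * P₁ᴴ + P₂ * D * P₂ᴴ := by
  simp [fromCols_mul_fromBlocks, conjTranspose_fromCols_eq_fromRows_conjTranspose,
    fromCols_mul_fromRows]

theorem posDef_add_of_mul_add_mul_eq_one {𝕜 n p q : Type*} [RCLike 𝕜] [Finite n] [DecidableEq n]
    [Fintype p] [Fintype q] {A : Matrix p p 𝕜} {D : Matrix q q 𝕜}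
    (hA : A.PosDef) (hD : D.PosDef) {P₁ : Matrix n p 𝕜} {P₂ : Matrix n q 𝕜}
    {Q₁ : Matrix p n 𝕜} {Q₂ : Matrix q n 𝕜} (hPQ : P₁ * Q₁ + P₂ * Q₂ = 1) :
    (P₁ * A * P₁ᴴ + P₂ * D * P₂ᴴ).PosDef := by
  rw [← fromCols_mul_fromBlocks_zero_mul_conjTranspose]
  exact posDef_mul_mul_conjTranspose_of_mul_eq_one (posDef_fromBlocks_zero hA hD)
    ((fromCols_mul_fromRows ..).trans hPQ)

variable {𝕜 m n p q : Type*} [RCLike 𝕜] [Fintype m] [DecidableEq m] [Fintype n] [DecidableEq n]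
  [Fintype p] [DecidableEq p] [Fintype q] [DecidableEq q]

theorem inv_mul_mul_conjTranspose_le_of_mul_eq_one {A : Matrix m m 𝕜} (hA : A.PosDef)
    {P : Matrix n m 𝕜} {Q : Matrix m n 𝕜} (hPQ : P * Q = 1) :
    (P * A * Pᴴ)⁻¹ ≤ Qᴴ * A⁻¹ * Q := by
  have hS := posDef_mul_mul_conjTranspose_of_mul_eq_one hA hPQ
  set W := (P * A * Pᴴ)⁻¹ with hW
  have := hA.isUnit.invertible
  have := hS.isUnit.invertible
  have hWS : W * (P * A * Pᴴ) = 1 := inv_mul_of_invertible _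
  have hQP : Qᴴ * Pᴴ = 1 := by rw [← conjTranspose_mul, hPQ, conjTranspose_one]
  have hstar : (A⁻¹ * Q - Pᴴ * W)ᴴ = Qᴴ * A⁻¹ - W * P := by
    simp only [conjTranspose_sub, conjTranspose_mul, conjTranspose_conjTranspose,
      hA.inv.isHermitian.eq, hW, hS.inv.isHermitian.eq]
  have square : Qᴴ * A⁻¹ * Q - W = (A⁻¹ * Q - Pᴴ * W)ᴴ * A * (A⁻¹ * Q - Pᴴ * W) :=
    calc Qᴴ * A⁻¹ * Q - W
        = Qᴴ * A⁻¹ * Q - W * (P * Q) - (Qᴴ * Pᴴ) * W + W * (P * A * Pᴴ) * W := by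
          rw [hPQ, hQP, hWS, Matrix.mul_one, Matrix.one_mul]; abel
      _ = (Qᴴ * A⁻¹ - W * P) * A * (A⁻¹ * Q - Pᴴ * W) := by
          simp only [Matrix.sub_mul, Matrix.mul_sub, Matrix.mul_assoc,
            mul_inv_cancel_left_of_invertible, inv_mul_cancel_left_of_invertible]
          abel
      _ = (A⁻¹ * Q - Pᴴ * W)ᴴ * A * (A⁻¹ * Q - Pᴴ * W) := by rw [hstar]
  rw [le_iff, square]
  exact hA.posSemidef.conjTranspose_mul_mul_same _

theorem inv_add_le_of_mul_add_mul_eq_one {A : Matrix p p 𝕜} {D : Matrix q q 𝕜}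
    (hA : A.PosDef) (hD : D.PosDef) {P₁ : Matrix n p 𝕜} {P₂ : Matrix n q 𝕜}
    {Q₁ : Matrix p n 𝕜} {Q₂ : Matrix q n 𝕜} (hPQ : P₁ * Q₁ + P₂ * Q₂ = 1) :
    (P₁ * A * P₁ᴴ + P₂ * D * P₂ᴴ)⁻¹ ≤ Q₁ᴴ * A⁻¹ * Q₁ + Q₂ᴴ * D⁻¹ * Q₂ := by
  have key := inv_mul_mul_conjTranspose_le_of_mul_eq_one (posDef_fromBlocks_zero hA hD)
    ((fromCols_mul_fromRows ..).trans hPQ)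
  rw [fromCols_mul_fromBlocks_zero_mul_conjTranspose] at key
  simpa [inv_fromBlocks_zero₂₁_of_isUnit_iff _ _ _ (iff_of_true hA.isUnit hD.isUnit),
    conjTranspose_fromRows_eq_fromCols_conjTranspose, fromCols_mul_fromBlocks,
    fromCols_mul_fromRows] using key

end RightInverse

theorem replicateCol_mul_diagonal_const {R m ι : Type*} [CommSemiring R] [Fintype ι]
    [DecidableEq ι] (u : m → R) (c : R) :
    replicateCol ι u * (diagonal fun _ => c : Matrix ι ι R) = c • replicateCol ι u := by
  rw [← smul_one_eq_diagonal, Matrix.mul_smul, Matrix.mul_one]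

section RankOne

open scoped MatrixOrder ComplexOrder

variable {𝕜 n : Type*} [RCLike 𝕜] [Fintype n] [DecidableEq n] {H : Matrix n n 𝕜} {c : 𝕜}

theorem posDef_conj_one_sub_vecMulVec_add (hH : H.PosDef) (hc : 0 < c) (u v : n → 𝕜) :
    ((1 - vecMulVec u v) * H * (1 - vecMulVec u v)ᴴ + c • vecMulVec u (star u)).PosDef := by
  have hD : (diagonal fun _ : Unit => c).PosDef := PosDef.diagonal fun _ => hc
  have hPQ : (1 - vecMulVec u v) * 1 + replicateCol Unit u * replicateRow Unit v = 1 := by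
    rw [← vecMulVec_eq, Matrix.mul_one, sub_add_cancel]
  have := posDef_add_of_mul_add_mul_eq_one hH hD hPQ
  simpa [vecMulVec_eq Unit, replicateCol_mul_diagonal_const] using this

theorem inv_conj_one_sub_vecMulVec_add_le (hH : H.PosDef) (hc : 0 < c) (u v : n → 𝕜) :
    ((1 - vecMulVec u v) * H * (1 - vecMulVec u v)ᴴ + c • vecMulVec u (star u))⁻¹ ≤
      H⁻¹ + c⁻¹ • vecMulVec (star v) v := by
  have hD : (diagonal fun _ : Unit => c).PosDef := PosDef.diagonal fun _ => hc
  have hPQ : (1 - vecMulVec u v) * 1 + replicateCol Unit u * replicateRow Unit v = 1 := by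
    rw [← vecMulVec_eq, Matrix.mul_one, sub_add_cancel]
  have := inv_add_le_of_mul_add_mul_eq_one hH hD hPQ
  simpa [vecMulVec_eq Unit, replicateCol_mul_diagonal_const] using this

end RankOne

section Spectrum

open scoped MatrixOrder ComplexOrder

variable {𝕜 n : Type*} [RCLike 𝕜] [Fintype n] [DecidableEq n] {A : Matrix n n 𝕜} {μ τ : ℝ}

theorem le_re_trace_of_mem_spectrum (hA : A.PosSemidef) (hμ : μ ∈ spectrum ℝ A) :
    μ ≤ RCLike.re A.trace := by
  rw [hA.isHermitian.spectrum_real_eq_range_eigenvalues] at hμ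
  obtain ⟨i, rfl⟩ := hμ
  rw [hA.isHermitian.trace_eq_sum_eigenvalues, ← RCLike.ofReal_sum, RCLike.ofReal_re]
  exact Finset.single_le_sum (fun j _ => hA.eigenvalues_nonneg j) (Finset.mem_univ i)

theorem one_div_le_of_mem_spectrum_of_trace_inv_le (hA : A.PosDef)
    (hτ : RCLike.re A⁻¹.trace ≤ τ) (hμ : μ ∈ spectrum ℝ A) : 1 / τ ≤ μ := by
  have hμ_pos : 0 < μ := hA.isStrictlyPositive.spectrum_pos hμ
  have hμ_inv : μ⁻¹ ∈ spectrum ℝ A⁻¹ := by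
    simpa [coe_units_inv] using (spectrum.inv₀_mem_inv_iff (a := hA.isUnit.unit)).mpr hμ
  rw [one_div]
  exact inv_le_of_inv_le₀ hμ_pos ((le_re_trace_of_mem_spectrum hA.inv.posSemidef hμ_inv).trans hτ)

end Spectrum

theorem le_mul_div_add_sub_mul {K : Type*} [Field K] [LinearOrder K] [IsStrictOrderedRing K]
    {γ ω h : K} (hω : 0 < ω) (hωγ : ω ≤ γ) (hh : 0 ≤ h) :
    γ ≤ ω * (γ / ω + (γ - ω) * h) := by
  rw [mul_add, mul_div_cancel₀ _ hω.ne']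
  exact le_add_of_nonneg_right (mul_nonneg hω.le (mul_nonneg (sub_nonneg.mpr hωγ) hh))

section Update

open scoped MatrixOrder

variable {n : Type*} [Fintype n] [DecidableEq n]

/-- The SP-BFGS update `H₊` of the inverse Hessian approximation `H` for the step `s` and the
gradient difference `y`. The penalty parameter `β` enters only through the scalars `γ` and `ω`, so
these are the arguments in its place. -/
noncomputable def spbfgsUpdate (H : Matrix n n ℝ) (s y : n → ℝ) (γ ω : ℝ) : Matrix n n ℝ :=
  (1 - ω • vecMulVec s y) * H * (1 - ω • vecMulVec y s) +
    (ω * (γ / ω + (γ - ω) * (y ⬝ᵥ H *ᵥ y))) • vecMulVec s s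

theorem spbfgsUpdate_eq_conj_add (H : Matrix n n ℝ) (s y : n → ℝ) (γ ω : ℝ) :
    spbfgsUpdate H s y γ ω =
      (1 - vecMulVec s (ω • y)) * H * (1 - vecMulVec s (ω • y))ᴴ +
        (ω * (γ / ω + (γ - ω) * (y ⬝ᵥ H *ᵥ y))) • vecMulVec s (star s) := by
  simp [spbfgsUpdate]

variable {H : Matrix n n ℝ} {γ ω : ℝ}

theorem posDef_spbfgsUpdate (hH : H.PosDef) (hω : 0 < ω) (hωγ : ω ≤ γ) (s y : n → ℝ) :
    (spbfgsUpdate H s y γ ω).PosDef := by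
  have hquad : 0 ≤ y ⬝ᵥ H *ᵥ y := by simpa using hH.posSemidef.dotProduct_mulVec_nonneg y
  rw [spbfgsUpdate_eq_conj_add]
  exact posDef_conj_one_sub_vecMulVec_add hH
    ((hω.trans_le hωγ).trans_le (le_mul_div_add_sub_mul hω hωγ hquad)) s (ω • y)

theorem inv_spbfgsUpdate_le (hH : H.PosDef) (hω : 0 < ω) (hωγ : ω ≤ γ) (s y : n → ℝ) :
    (spbfgsUpdate H s y γ ω)⁻¹ ≤ H⁻¹ + γ • vecMulVec y y := by
  have hquad : 0 ≤ y ⬝ᵥ H *ᵥ y := by simpa using hH.posSemidef.dotProduct_mulVec_nonneg y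
  have hcoeff := le_mul_div_add_sub_mul hω hωγ hquad
  rw [spbfgsUpdate_eq_conj_add]
  set c := ω * (γ / ω + (γ - ω) * (y ⬝ᵥ H *ᵥ y))
  have hγ : 0 < γ := hω.trans_le hωγ
  have hc : 0 < c := hγ.trans_le hcoeff
  have hscale : c⁻¹ * (ω * ω) ≤ γ := by
    rw [inv_mul_le_iff₀ hc]
    gcongr
    exact hωγ.trans hcoeff
  calc _ ≤ H⁻¹ + c⁻¹ • vecMulVec (star (ω • y)) (ω • y) :=
        inv_conj_one_sub_vecMulVec_add_le hH hc s (ω • y)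
    _ = H⁻¹ + (c⁻¹ * (ω * ω)) • vecMulVec y y := by simp [smul_smul]
    _ ≤ H⁻¹ + γ • vecMulVec y y := by
        rw [le_iff, add_sub_add_left_eq_sub, ← sub_smul]
        simpa using (posSemidef_vecMulVec_self_star y).smul (sub_nonneg.mpr hscale)

theorem trace_inv_spbfgsUpdate_le (hH : H.PosDef) (hω : 0 < ω) (hωγ : ω ≤ γ) (s y : n → ℝ) :
    (spbfgsUpdate H s y γ ω)⁻¹.trace ≤ H⁻¹.trace + γ * (y ⬝ᵥ y) := by
  have := (tracePositiveLinearMap n ℝ ℝ).monotone (inv_spbfgsUpdate_le hH hω hωγ s y)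
  simpa using this

end Update

theorem spbfgs_inverse_eigenvalue_bound_general
    {n : Type*} [Fintype n] [DecidableEq n] (s y : n → ℝ)
    (H : Matrix n n ℝ) (hH : H.PosDef) (B : Matrix n n ℝ) (hB : B = H⁻¹)
    (β : ℝ) (hβ : 0 < β) (hcurv : -(1 / β) < s ⬝ᵥ y)
    (γ ω : ℝ) (hγ : γ = 1 / (s ⬝ᵥ y + 1 / β)) (hω : ω = 1 / (s ⬝ᵥ y + 2 / β))
    (Hplus : Matrix n n ℝ) (hHplus : Hplus = spbfgsUpdate H s y γ ω)
    (Bplus : Matrix n n ℝ) (hBplus : Bplus = Hplus⁻¹) :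
    (∀ μ ∈ spectrum ℝ Bplus, μ ≤ Bplus.trace) ∧
      Bplus.trace ≤ B.trace + γ * √(y ⬝ᵥ y) ^ 2 ∧
      ∀ μ ∈ spectrum ℝ Hplus, 1 / (B.trace + γ * √(y ⬝ᵥ y) ^ 2) ≤ μ := by
  have hden_pos : 0 < s ⬝ᵥ y + 1 / β := by linarith
  have hden_le : s ⬝ᵥ y + 1 / β ≤ s ⬝ᵥ y + 2 / β := by gcongr; norm_num
  have hω_pos : 0 < ω := hω ▸ one_div_pos.mpr (hden_pos.trans_le hden_le)
  have hωγ : ω ≤ γ := hω ▸ hγ ▸ one_div_le_one_div_of_le hden_pos hden_le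
  have hpos : Hplus.PosDef := hHplus ▸ posDef_spbfgsUpdate hH hω_pos hωγ s y
  have htrace : Hplus⁻¹.trace ≤ B.trace + γ * √(y ⬝ᵥ y) ^ 2 := by
    rw [Real.sq_sqrt (by simpa using dotProduct_star_self_nonneg y), hB, hHplus]
    exact trace_inv_spbfgsUpdate_le hH hω_pos hωγ s y
  subst hBplus
  exact ⟨fun μ hμ => le_re_trace_of_mem_spectrum hpos.inv.posSemidef hμ, htrace,
    fun μ hμ => one_div_le_of_mem_spectrum_of_trace_inv_le hpos htrace hμ⟩

/-- **Eigenvalue bound for the SP-BFGS Hessian approximation `B₊ = H₊⁻¹`.**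
`λ_max(B₊) ≤ Tr(B₊) ≤ (1 + β‖y‖₂‖s‖₂) Tr(B) + γ‖y‖₂²`; equivalently, the smallest
eigenvalue of `H₊` is at least `1/[(1 + β‖y‖₂‖s‖₂) Tr(B) + γ‖y‖₂²]`. -/
theorem spbfgs_inverse_eigenvalue_bound
    {n : ℕ} (s y : Fin n → ℝ) (hs : s ≠ 0)
    (H : Matrix (Fin n) (Fin n) ℝ) (hH : H.PosDef)
    (B : Matrix (Fin n) (Fin n) ℝ) (hB : B = H⁻¹)
    (β : ℝ) (hβ : 0 < β) (hcurv : -(1 / β) < s ⬝ᵥ y)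
    (γ ω : ℝ) (hγ : γ = 1 / (s ⬝ᵥ y + 1 / β)) (hω : ω = 1 / (s ⬝ᵥ y + 2 / β))
    (Hplus : Matrix (Fin n) (Fin n) ℝ)
    (hHplus : Hplus =
      (1 - ω • vecMulVec s y) * H * (1 - ω • vecMulVec y s) +
        (ω * (γ / ω + (γ - ω) * (y ⬝ᵥ H *ᵥ y))) • vecMulVec s s)
    (Bplus : Matrix (Fin n) (Fin n) ℝ) (hBplus : Bplus = Hplus⁻¹) :
    (∀ μ ∈ spectrum ℝ Bplus, μ ≤ Matrix.trace Bplus) ∧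
      Matrix.trace Bplus ≤
        (1 + β * Real.sqrt (y ⬝ᵥ y) * Real.sqrt (s ⬝ᵥ s)) * Matrix.trace B +
          γ * Real.sqrt (y ⬝ᵥ y) ^ 2 ∧
      ∀ μ ∈ spectrum ℝ Hplus,
        1 / ((1 + β * Real.sqrt (y ⬝ᵥ y) * Real.sqrt (s ⬝ᵥ s)) * Matrix.trace B +
            γ * Real.sqrt (y ⬝ᵥ y) ^ 2) ≤ μ := by
  obtain ⟨hmax, htrace, hmin⟩ := spbfgs_inverse_eigenvalue_bound_general
    s y H hH B hB β hβ hcurv γ ω hγ hω Hplus hHplus Bplus hBplus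
  have : Nonempty (Fin n) := (Function.ne_iff.mp hs).nonempty
  have hB_pos : 0 < B.trace := hB ▸ hH.inv.trace_pos
  have hγ_pos : 0 < γ := hγ ▸ one_div_pos.mpr (by linarith)
  have hslack : B.trace + γ * √(y ⬝ᵥ y) ^ 2 ≤
      (1 + β * √(y ⬝ᵥ y) * √(s ⬝ᵥ s)) * B.trace + γ * √(y ⬝ᵥ y) ^ 2 := by
    gcongr
    exact le_mul_of_one_le_left hB_pos.le (le_add_of_nonneg_right (by positivity))
  exact ⟨hmax, htrace.trans hslack,
    fun μ hμ => (one_div_le_one_div_of_le (by positivity) hslack).trans (hmin μ hμ)⟩
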